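/- arXiv:1906.05479 — 3 statements merged into one kernel-verified Lean document; each statement's English description precedes it below -/
import Mathlib

section
/- The set D_f is a *-subalgebra of 𝒜: for A, B ∈ D_f one has A* ∈ D_f with ‖A*‖_f = ‖A‖_f, and AB ∈ D_f with ‖AB − E_N(AB)‖ ≤ 3‖A‖_f‖B‖_f·f(N) for every N ∈ ℕ. Moreover, D_f equipped with the norm ‖·‖_f is complete, i.e. a Banach space. -/
open Filter

variable {𝒜 : Type*}

/-- The quasi-locality norm `‖A‖_f = ‖A‖ + sup_{N ≥ 1} ‖A - E_N(A)‖ / f(N)`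
(as a real number; the supremum is the real `sSup` of the corresponding set). -/
noncomputable def fnorm [NormedRing 𝒜] [NormedAlgebra ℂ 𝒜]
    (E : ℕ → 𝒜 →ₗ[ℂ] 𝒜) (f : ℝ → ℝ) (A : 𝒜) : ℝ :=
  ‖A‖ + sSup {r : ℝ | ∃ N : ℕ, 1 ≤ N ∧ r = ‖A - E N A‖ / f N}

/-- `A ∈ D_f` iff `‖A‖_f < ∞`, i.e. the family `‖A - E_N(A)‖ / f(N)` is bounded above. -/
def memDf [NormedRing 𝒜] [NormedAlgebra ℂ 𝒜]
    (E : ℕ → 𝒜 →ₗ[ℂ] 𝒜) (f : ℝ → ℝ) (A : 𝒜) : Prop :=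
  BddAbove {r : ℝ | ∃ N : ℕ, 1 ≤ N ∧ r = ‖A - E N A‖ / f N}

/-!
Splitting `A * B - E_N (A * B)` so that every term contains `A - E_N A` or `B - E_N B` gives the
product estimate. For completeness, the inequality `‖A‖_f ≤ C` is a conjunction of the
norm-closed conditions `‖A‖ + ‖A - E_N A‖ / f N ≤ C`. A `‖·‖_f`-Cauchy sequence has a limit in
norm, and passing to that limit in `‖a n - a m‖_f ≤ ε` shows that it is also a limit for `‖·‖_f`.
-/

section SingleMap

variable {R F : Type*} [FunLike F R R]

lemma norm_mul_sub_map_mul_le [NonUnitalSeminormedRing R] [AddMonoidHomClass F R R] (E : F)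
    (hE_norm : ∀ x, ‖E x‖ ≤ ‖x‖) (hE_mul : ∀ x y, E (E x * y) = E x * E y) (a b : R) :
    ‖a * b - E (a * b)‖ ≤ 2 * (‖a - E a‖ * ‖b‖) + ‖a‖ * ‖b - E b‖ := by
  have split : a * b - E (a * b) = (a - E a) * b + E a * (b - E b) - E ((a - E a) * b) := by
    rw [sub_mul, map_sub, hE_mul, mul_sub]
    abel
  have left_le : ‖(a - E a) * b‖ ≤ ‖a - E a‖ * ‖b‖ := norm_mul_le _ _
  calc ‖a * b - E (a * b)‖
      ≤ ‖(a - E a) * b‖ + ‖E a * (b - E b)‖ + ‖E ((a - E a) * b)‖ := by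
        rw [split]
        exact (norm_sub_le _ _).trans (by gcongr; exact norm_add_le _ _)
    _ ≤ ‖a - E a‖ * ‖b‖ + ‖a‖ * ‖b - E b‖ + ‖a - E a‖ * ‖b‖ := by
        gcongr
        · exact (norm_mul_le _ _).trans (by gcongr; exact hE_norm a)
        · exact (hE_norm _).trans left_le
    _ = 2 * (‖a - E a‖ * ‖b‖) + ‖a‖ * ‖b - E b‖ := by ring

lemma norm_star_sub_map_star [SeminormedAddCommGroup R] [StarAddMonoid R] [NormedStarGroup R]
    (E : F) (hE_star : ∀ x, E (star x) = star (E x)) (a : R) :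
    ‖star a - E (star a)‖ = ‖a - E a‖ := by
  rw [hE_star, ← star_sub, norm_star]

end SingleMap

section QuasiLocalNorm

variable [NormedRing 𝒜] [NormedAlgebra ℂ 𝒜] {E : ℕ → 𝒜 →ₗ[ℂ] 𝒜} {f : ℝ → ℝ} {A B : 𝒜}

lemma memDf_and_fnorm_le_iff {C : ℝ} :
    memDf E f A ∧ fnorm E f A ≤ C ↔ ∀ N : ℕ, 1 ≤ N → ‖A‖ + ‖A - E N A‖ / f N ≤ C := by
  constructor
  · rintro ⟨hA, hC⟩ N hN
    have le_sSup := le_csSup hA ⟨N, hN, rfl⟩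
    exact (add_le_add_right le_sSup ‖A‖).trans hC
  · intro h
    have upper : C - ‖A‖ ∈ upperBounds {r : ℝ | ∃ N : ℕ, 1 ≤ N ∧ r = ‖A - E N A‖ / f N} := by
      rintro _ ⟨N, hN, rfl⟩
      exact le_sub_iff_add_le'.2 (h N hN)
    exact ⟨⟨_, upper⟩, le_sub_iff_add_le'.1 (csSup_le ⟨_, 1, le_rfl, rfl⟩ upper)⟩

lemma isClosed_setOf_memDf_and_fnorm_le (hE : ∀ N, Continuous (E N)) (C : ℝ) :
    IsClosed {A | memDf E f A ∧ fnorm E f A ≤ C} := by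
  simp only [memDf_and_fnorm_le_iff, Set.ofPred_forall]
  refine isClosed_iInter fun N => isClosed_iInter fun _ => isClosed_le ?_ continuous_const
  exact continuous_norm.add ((continuous_id.sub (hE N)).norm.div_const _)

lemma memDf_of_norm_sub_le (hf : ∀ N : ℕ, 1 ≤ N → 0 < f N) {C : ℝ}
    (h : ∀ N : ℕ, 1 ≤ N → ‖A - E N A‖ ≤ C * f N) : memDf E f A := by
  refine ⟨C, ?_⟩
  rintro _ ⟨N, hN, rfl⟩
  exact (div_le_iff₀ (hf N hN)).2 (h N hN)

lemma norm_le_fnorm (hf : ∀ N : ℕ, 1 ≤ N → 0 < f N) (A : 𝒜) : ‖A‖ ≤ fnorm E f A := by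
  refine le_add_of_nonneg_right (Real.sSup_nonneg ?_)
  rintro _ ⟨N, hN, rfl⟩
  exact div_nonneg (norm_nonneg _) (hf N hN).le

lemma fnorm_nonneg (hf : ∀ N : ℕ, 1 ≤ N → 0 < f N) (A : 𝒜) : 0 ≤ fnorm E f A :=
  (norm_nonneg A).trans (norm_le_fnorm hf A)

lemma memDf.norm_sub_le (hA : memDf E f A) (hf : ∀ N : ℕ, 1 ≤ N → 0 < f N) {N : ℕ}
    (hN : 1 ≤ N) : ‖A - E N A‖ ≤ fnorm E f A * f N := by
  rw [← div_le_iff₀ (hf N hN)]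
  exact (le_add_of_nonneg_left (norm_nonneg A)).trans
    (memDf_and_fnorm_le_iff.1 ⟨hA, le_rfl⟩ N hN)

lemma memDf.sub (hA : memDf E f A) (hB : memDf E f B) (hf : ∀ N : ℕ, 1 ≤ N → 0 < f N) :
    memDf E f (A - B) := by
  refine memDf_of_norm_sub_le hf (C := fnorm E f A + fnorm E f B) fun N hN => ?_
  rw [map_sub, sub_sub_sub_comm, add_mul]
  exact norm_sub_le_of_le (hA.norm_sub_le hf hN) (hB.norm_sub_le hf hN)

lemma memDf_star_iff [StarAddMonoid 𝒜] [NormedStarGroup 𝒜]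
    (hE_star : ∀ N x, E N (star x) = star (E N x)) : memDf E f (star A) ↔ memDf E f A := by
  simp only [memDf, norm_star_sub_map_star _ (hE_star _)]

lemma fnorm_star [StarAddMonoid 𝒜] [NormedStarGroup 𝒜]
    (hE_star : ∀ N x, E N (star x) = star (E N x)) (A : 𝒜) :
    fnorm E f (star A) = fnorm E f A := by
  simp only [fnorm, norm_star, norm_star_sub_map_star _ (hE_star _)]

lemma memDf.norm_mul_sub_le (hA : memDf E f A) (hB : memDf E f B)
    (hE_norm : ∀ N x, ‖E N x‖ ≤ ‖x‖) (hE_mul : ∀ N x y, E N (E N x * y) = E N x * E N y)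
    (hf : ∀ N : ℕ, 1 ≤ N → 0 < f N) {N : ℕ} (hN : 1 ≤ N) :
    ‖A * B - E N (A * B)‖ ≤ 3 * fnorm E f A * fnorm E f B * f N := by
  have hA_nonneg : 0 ≤ fnorm E f A := fnorm_nonneg hf A
  have hfN : 0 < f N := hf N hN
  calc ‖A * B - E N (A * B)‖
      ≤ 2 * (‖A - E N A‖ * ‖B‖) + ‖A‖ * ‖B - E N B‖ :=
        norm_mul_sub_map_mul_le (E N) (hE_norm N) (hE_mul N) A B
    _ ≤ 2 * (fnorm E f A * f N * fnorm E f B) + fnorm E f A * (fnorm E f B * f N) := by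
        gcongr
        · exact hA.norm_sub_le hf hN
        · exact norm_le_fnorm hf B
        · exact norm_le_fnorm hf A
        · exact hB.norm_sub_le hf hN
    _ = 3 * fnorm E f A * fnorm E f B * f N := by ring

lemma memDf.mul (hA : memDf E f A) (hB : memDf E f B)
    (hE_norm : ∀ N x, ‖E N x‖ ≤ ‖x‖) (hE_mul : ∀ N x y, E N (E N x * y) = E N x * E N y)
    (hf : ∀ N : ℕ, 1 ≤ N → 0 < f N) : memDf E f (A * B) :=
  memDf_of_norm_sub_le hf fun _ hN => hA.norm_mul_sub_le hB hE_norm hE_mul hf hN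

lemma cauchySeq_of_fnorm_sub_le (hf : ∀ N : ℕ, 1 ≤ N → 0 < f N) {a : ℕ → 𝒜}
    (ha : ∀ ε : ℝ, 0 < ε → ∃ K : ℕ, ∀ m n : ℕ, K ≤ m → K ≤ n → fnorm E f (a m - a n) ≤ ε) :
    CauchySeq a := by
  refine Metric.cauchySeq_iff.2 fun ε hε => ?_
  obtain ⟨K, hK⟩ := ha (ε / 2) (half_pos hε)
  refine ⟨K, fun m hm n hn => ?_⟩
  calc dist (a m) (a n) = ‖a m - a n‖ := dist_eq_norm _ _
    _ ≤ fnorm E f (a m - a n) := norm_le_fnorm hf _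
    _ ≤ ε / 2 := hK m n hm hn
    _ < ε := half_lt_self hε

lemma exists_memDf_tendsto_fnorm_sub [CompleteSpace 𝒜] (hE : ∀ N, Continuous (E N))
    (hf : ∀ N : ℕ, 1 ≤ N → 0 < f N) {a : ℕ → 𝒜} (ha_mem : ∀ n, memDf E f (a n))
    (ha : ∀ ε : ℝ, 0 < ε → ∃ K : ℕ, ∀ m n : ℕ, K ≤ m → K ≤ n → fnorm E f (a m - a n) ≤ ε) :
    ∃ A : 𝒜, memDf E f A ∧ Tendsto (fun n => fnorm E f (a n - A)) atTop (nhds 0) := by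
  obtain ⟨A, hA⟩ := cauchySeq_tendsto_of_complete (cauchySeq_of_fnorm_sub_le hf ha)
  have limit_bound : ∀ ε : ℝ, 0 < ε →
      ∃ K : ℕ, ∀ n, K ≤ n → memDf E f (a n - A) ∧ fnorm E f (a n - A) ≤ ε := by
    intro ε hε
    obtain ⟨K, hK⟩ := ha ε hε
    refine ⟨K, fun n hn => ?_⟩
    refine (isClosed_setOf_memDf_and_fnorm_le hE ε).mem_of_tendsto (hA.const_sub (a n)) ?_
    filter_upwards [eventually_ge_atTop K] with m hm
    exact ⟨(ha_mem n).sub (ha_mem m) hf, hK n m hn hm⟩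
  refine ⟨A, ?_, ?_⟩
  · obtain ⟨K, hK⟩ := limit_bound 1 one_pos
    simpa only [sub_sub_cancel] using (ha_mem K).sub (hK K le_rfl).1 hf
  · refine Metric.tendsto_atTop.2 fun ε hε => ?_
    obtain ⟨K, hK⟩ := limit_bound (ε / 2) (half_pos hε)
    refine ⟨K, fun n hn => ?_⟩
    rw [Real.dist_0_eq_abs, abs_of_nonneg (fnorm_nonneg hf _)]
    exact (hK n hn).2.trans_lt (half_lt_self hε)

end QuasiLocalNorm

theorem stmt_8_general [NormedRing 𝒜] [StarAddMonoid 𝒜] [NormedStarGroup 𝒜] [CompleteSpace 𝒜]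
    [NormedAlgebra ℂ 𝒜] (E : ℕ → 𝒜 →ₗ[ℂ] 𝒜)
    (hE_norm : ∀ (N : ℕ) (x : 𝒜), ‖E N x‖ ≤ ‖x‖)
    (hE_star : ∀ (N : ℕ) (x : 𝒜), E N (star x) = star (E N x))
    (hE_mul : ∀ (N : ℕ) (x y : 𝒜), E N (E N x * y) = E N x * E N y)
    (f : ℝ → ℝ) (hf : ∀ N : ℕ, 1 ≤ N → 0 < f N) :
    (∀ A : 𝒜, memDf E f A → memDf E f (star A) ∧ fnorm E f (star A) = fnorm E f A) ∧
    (∀ A B : 𝒜, memDf E f A → memDf E f B → memDf E f (A * B) ∧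
      ∀ N : ℕ, 1 ≤ N →
        ‖A * B - E N (A * B)‖ ≤ 3 * fnorm E f A * fnorm E f B * f N) ∧
    (∀ a : ℕ → 𝒜, (∀ n, memDf E f (a n)) →
      (∀ ε : ℝ, 0 < ε → ∃ K : ℕ, ∀ m n : ℕ, K ≤ m → K ≤ n →
        fnorm E f (a m - a n) ≤ ε) →
      ∃ A : 𝒜, memDf E f A ∧
        Tendsto (fun n => fnorm E f (a n - A)) atTop (nhds 0)) := by
  have hE_cont (N : ℕ) : Continuous (E N) :=
    AddMonoidHomClass.continuous_of_bound (E N) 1 (by simpa only [one_mul] using hE_norm N)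
  refine ⟨fun A hA => ⟨(memDf_star_iff hE_star).2 hA, fnorm_star hE_star A⟩,
    fun A B hA hB => ⟨hA.mul hB hE_norm hE_mul hf, fun N hN => ?_⟩, fun a ha_mem ha => ?_⟩
  · exact hA.norm_mul_sub_le hB hE_norm hE_mul hf hN
  · exact exists_memDf_tendsto_fnorm_sub hE_cont hf ha_mem ha

theorem stmt_8 [NormedRing 𝒜] [StarRing 𝒜] [CStarRing 𝒜] [CompleteSpace 𝒜]
    [NormedAlgebra ℂ 𝒜] [StarModule ℂ 𝒜]
    (E : ℕ → 𝒜 →ₗ[ℂ] 𝒜)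
    (hE_norm : ∀ (N : ℕ) (x : 𝒜), ‖E N x‖ ≤ ‖x‖)
    (hE_star : ∀ (N : ℕ) (x : 𝒜), E N (star x) = star (E N x))
    (hE_comp : ∀ (N M : ℕ) (x : 𝒜), E N (E M x) = E (min N M) x)
    (hE_mul₁ : ∀ (N : ℕ) (x y : 𝒜), E N (E N x * y) = E N x * E N y)
    (hE_mul₂ : ∀ (N : ℕ) (x y : 𝒜), E N (x * E N y) = E N x * E N y)
    (f : ℝ → ℝ) (hf_cont : ContinuousOn f (Set.Ioi 0))
    (hf_anti : AntitoneOn f (Set.Ioi 0)) (hf_pos : ∀ t : ℝ, 0 < t → 0 < f t)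
    (hf_lim : Tendsto f atTop (nhds 0)) :
    (∀ A : 𝒜, memDf E f A → memDf E f (star A) ∧ fnorm E f (star A) = fnorm E f A) ∧
    (∀ A B : 𝒜, memDf E f A → memDf E f B → memDf E f (A * B) ∧
      ∀ N : ℕ, 1 ≤ N →
        ‖A * B - E N (A * B)‖ ≤ 3 * fnorm E f A * fnorm E f B * f N) ∧
    (∀ a : ℕ → 𝒜, (∀ n, memDf E f (a n)) →
      (∀ ε : ℝ, 0 < ε → ∃ K : ℕ, ∀ m n : ℕ, K ≤ m → K ≤ n →
        fnorm E f (a m - a n) ≤ ε) →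
      ∃ A : 𝒜, memDf E f A ∧
        Tendsto (fun n => fnorm E f (a n - A)) atTop (nhds 0)) :=
  stmt_8_general E hE_norm hE_star hE_mul₁ f fun N hN => hf_pos N (by exact_mod_cast hN)
end

section
/- Fix 0 < β₄ < β₂ < 1 and set f₁(t) := e^{−t^{β₂}} and g(t) := e^{−t^{β₄}} for t > 0. Then for every A ∈ L_φ ∩ D_{f₁} there exists a sequence (u_N)_{N∈ℕ} in 𝒜 such that for every N: u_N lies in the range of E_N and 0 ≤ u_N ≤ 1; and as N → ∞: ‖A(1 − u_N)‖_g → 0, φ(u_N) → 0, and inf_{x ∈ L_φ} ‖x − u_N‖ → 0. -/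
open Filter

variable {𝒜 : Type*}

/-!
Put `h = |E_N A|²` and `u_N = h (ε_N + h)⁻¹`, an element of the range of `E_N`. Then
`‖E_N A (1 - u_N)‖² ≤ ε_N`, so `A (1 - u_N)` is small compared with `g(N)` once `ε_N = o(g(N)²)`,
and locality of `A` upgrades this to smallness in `‖·‖_g`. Replacing `E_N A` by `A` in `u_N` gives
`v_N ∈ 𝒜 A`, which lies in both `L_φ` and `ker φ`, and the resolvent identity yields
`‖u_N - v_N‖ = O(‖A - E_N A‖ / ε_N)`. Both requirements on `ε_N` can be met as soon as
`‖A - E_N A‖ = o(g(N)²)`, which holds for `A ∈ D_{f₁}` since `β₄ < β₂`.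
-/

open Asymptotics Topology

section PositiveFunctional

open scoped ComplexOrder InnerProductSpace

lemma map_mul_eq_zero_of_map_star_mul_self_eq_zero [NonUnitalCStarAlgebra 𝒜] [PartialOrder 𝒜]
    [StarOrderedRing 𝒜] (φ : 𝒜 →ₚ[ℂ] ℂ) {a : 𝒜} (ha : φ (star a * a) = 0) (b : 𝒜) :
    φ (b * a) = 0 := by
  have norm_a : ‖φ.toPreGNS a‖ = 0 := by simp [φ.preGNS_norm_def, ha]
  have cauchy_schwarz := norm_inner_le_norm (𝕜 := ℂ) (φ.toPreGNS (star b)) (φ.toPreGNS a)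
  rw [norm_a, mul_zero, norm_le_zero_iff] at cauchy_schwarz
  simpa [φ.preGNS_inner_def] using cauchy_schwarz

lemma map_star_mul_self_mul_left_eq_zero [NonUnitalCStarAlgebra 𝒜] [PartialOrder 𝒜]
    [StarOrderedRing 𝒜] (φ : 𝒜 →ₚ[ℂ] ℂ) {a : 𝒜} (ha : φ (star a * a) = 0) (b : 𝒜) :
    φ (star (b * a) * (b * a)) = 0 := by
  rw [← mul_assoc]
  exact map_mul_eq_zero_of_map_star_mul_self_eq_zero φ ha _

lemma exists_positiveLinearMap_toLinearMap_eq [NonUnitalCStarAlgebra 𝒜] [PartialOrder 𝒜]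
    [StarOrderedRing 𝒜] (φ : 𝒜 →ₗ[ℂ] ℂ)
    (hφ : ∀ x : 𝒜, 0 ≤ (φ (star x * x)).re ∧ (φ (star x * x)).im = 0) :
    ∃ ψ : 𝒜 →ₚ[ℂ] ℂ, ψ.toLinearMap = φ := by
  refine ⟨PositiveLinearMap.mk₀ φ fun x hx => ?_, rfl⟩
  obtain ⟨y, rfl⟩ := CStarAlgebra.nonneg_iff_eq_star_mul_self.mp hx
  exact Complex.nonneg_iff.mpr ⟨(hφ y).1, (hφ y).2.symm⟩

end PositiveFunctional

section RightSupportApprox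

variable [CStarAlgebra 𝒜] {a b : 𝒜} {ε : ℝ}

/-- The element `|b|² (ε + |b|²)⁻¹`, a continuous approximation at scale `ε` of the right support
projection of `b`. It is meant for `0 < ε`; for other `ε` the functional calculus may be junk. -/
noncomputable def rightSupportApprox (ε : ℝ) (b : 𝒜) : 𝒜 :=
  cfc (fun t : ℝ => t / (ε + t)) (star b * b)

lemma add_pos_of_mem_spectrum_star_mul_self (hε : 0 < ε) {t : ℝ}
    (ht : t ∈ spectrum ℝ (star b * b)) : 0 < ε + t :=
  add_pos_of_pos_of_nonneg hε (spectrum_star_mul_self_nonneg t ht)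

lemma continuousOn_div_add_spectrum_star_mul_self (hε : 0 < ε) {f : ℝ → ℝ} (hf : Continuous f) :
    ContinuousOn (fun t : ℝ => f t / (ε + t)) (spectrum ℝ (star b * b)) :=
  hf.continuousOn.div (by fun_prop) fun _ ht =>
    (add_pos_of_mem_spectrum_star_mul_self hε ht).ne'

lemma one_sub_rightSupportApprox (hε : 0 < ε) (b : 𝒜) :
    1 - rightSupportApprox ε b = cfc (fun t : ℝ => ε / (ε + t)) (star b * b) := by
  have hcont : ContinuousOn (fun t : ℝ => t / (ε + t)) (spectrum ℝ (star b * b)) :=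
    continuousOn_div_add_spectrum_star_mul_self hε continuous_id
  rw [rightSupportApprox, ← cfc_const_one ℝ (star b * b),
    ← cfc_sub (fun _ : ℝ => 1) _ (star b * b) continuousOn_const hcont]
  refine cfc_congr fun t ht => ?_
  have := (add_pos_of_mem_spectrum_star_mul_self hε ht).ne'
  field_simp
  ring

lemma star_mul_self_mul_one_sub_rightSupportApprox (hε : 0 < ε) (b : 𝒜) :
    star b * b * (1 - rightSupportApprox ε b) = ε • rightSupportApprox ε b := by
  have hcont : ContinuousOn (fun t : ℝ => ε / (ε + t)) (spectrum ℝ (star b * b)) :=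
    continuousOn_div_add_spectrum_star_mul_self hε continuous_const
  have hcont' : ContinuousOn (fun t : ℝ => t / (ε + t)) (spectrum ℝ (star b * b)) :=
    continuousOn_div_add_spectrum_star_mul_self hε continuous_id
  calc star b * b * (1 - rightSupportApprox ε b)
      = cfc (fun t : ℝ => t * (ε / (ε + t))) (star b * b) := by
        rw [one_sub_rightSupportApprox hε,
          cfc_mul (fun t : ℝ => t) _ _ (by fun_prop) hcont,
          cfc_id' ℝ (star b * b)]
    _ = cfc (fun t : ℝ => ε * (t / (ε + t))) (star b * b) := by
        congr! 2 with t
        ring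
    _ = ε • rightSupportApprox ε b := cfc_const_mul _ _ _ hcont'

lemma isSelfAdjoint_rightSupportApprox (ε : ℝ) (b : 𝒜) :
    IsSelfAdjoint (rightSupportApprox ε b) :=
  cfc_predicate _ _

lemma one_sub_rightSupportApprox_mul_star_mul_self (hε : 0 < ε) (b : 𝒜) :
    (1 - rightSupportApprox ε b) * (star b * b) = ε • rightSupportApprox ε b := by
  have hu := isSelfAdjoint_rightSupportApprox ε b
  simpa [hu.star_eq] using congrArg star (star_mul_self_mul_one_sub_rightSupportApprox hε b)

lemma rightSupportApprox_nonneg [PartialOrder 𝒜] [StarOrderedRing 𝒜] (hε : 0 < ε) (b : 𝒜) :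
    0 ≤ rightSupportApprox ε b :=
  cfc_nonneg fun t ht => div_nonneg (spectrum_star_mul_self_nonneg t ht)
    (add_pos_of_mem_spectrum_star_mul_self hε ht).le

lemma rightSupportApprox_le_one [PartialOrder 𝒜] [StarOrderedRing 𝒜] (hε : 0 < ε) (b : 𝒜) :
    rightSupportApprox ε b ≤ 1 :=
  cfc_le_one _ _ fun _ ht => div_le_one_of_le₀ (le_add_of_nonneg_left hε.le)
    (add_pos_of_mem_spectrum_star_mul_self hε ht).le

lemma norm_rightSupportApprox_le_one (hε : 0 < ε) (b : 𝒜) : ‖rightSupportApprox ε b‖ ≤ 1 := by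
  refine norm_cfc_le zero_le_one fun t ht => ?_
  have ht₀ := spectrum_star_mul_self_nonneg t ht
  rw [Real.norm_of_nonneg (by positivity)]
  exact div_le_one_of_le₀ (by linarith) (by positivity)

lemma norm_one_sub_rightSupportApprox_le_one (hε : 0 < ε) (b : 𝒜) :
    ‖1 - rightSupportApprox ε b‖ ≤ 1 := by
  rw [one_sub_rightSupportApprox hε]
  refine norm_cfc_le zero_le_one fun t ht => ?_
  have ht₀ := spectrum_star_mul_self_nonneg t ht
  rw [Real.norm_of_nonneg (by positivity)]
  exact div_le_one_of_le₀ (by linarith) (by positivity)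

lemma norm_mul_one_sub_rightSupportApprox_le (hε : 0 < ε) (b : 𝒜) :
    ‖b * (1 - rightSupportApprox ε b)‖ ≤ √ε := by
  set u := rightSupportApprox ε b with hu
  have star_mul_self_eq : star (b * (1 - u)) * (b * (1 - u)) = ε • ((1 - u) * u) := by
    rw [star_mul, star_sub, star_one, (isSelfAdjoint_rightSupportApprox ε b).star_eq, ← hu,
      mul_assoc, ← mul_assoc (star b), star_mul_self_mul_one_sub_rightSupportApprox hε,
      mul_smul_comm]
  apply Real.le_sqrt_of_sq_le
  calc ‖b * (1 - u)‖ ^ 2 = ε * ‖(1 - u) * u‖ := by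
        rw [sq, ← CStarRing.norm_star_mul_self, star_mul_self_eq, norm_smul,
          Real.norm_of_nonneg hε.le]
    _ ≤ ε * (1 * 1) := by
        gcongr
        exact norm_mul_le_of_le (norm_one_sub_rightSupportApprox_le_one hε b)
          (norm_rightSupportApprox_le_one hε b)
    _ = ε := by ring

lemma norm_mul_one_sub_rightSupportApprox_le_add (hε : 0 < ε) (a b : 𝒜) :
    ‖a * (1 - rightSupportApprox ε b)‖ ≤ ‖a - b‖ + √ε := by
  rw [← sub_add_cancel a b, add_mul, add_sub_cancel_right]
  refine norm_add_le_of_le ?_ (norm_mul_one_sub_rightSupportApprox_le hε b)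
  simpa using norm_mul_le_of_le le_rfl (norm_one_sub_rightSupportApprox_le_one hε b)

/- Up to the factor `ε`, this is the second resolvent identity. -/
lemma rightSupportApprox_sub_rightSupportApprox (hε : 0 < ε) (a b : 𝒜) :
    rightSupportApprox ε b - rightSupportApprox ε a =
      ε⁻¹ • ((1 - rightSupportApprox ε a) * (star b * b - star a * a) *
        (1 - rightSupportApprox ε b)) := by
  set u := rightSupportApprox ε b
  set v := rightSupportApprox ε a
  have compress : (1 - v) * (star b * b - star a * a) * (1 - u) = ε • (u - v) :=
    calc (1 - v) * (star b * b - star a * a) * (1 - u)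
        = (1 - v) * (star b * b * (1 - u)) - (1 - v) * (star a * a) * (1 - u) := by noncomm_ring
      _ = (1 - v) * (ε • u) - (ε • v) * (1 - u) := by
          rw [star_mul_self_mul_one_sub_rightSupportApprox hε,
            one_sub_rightSupportApprox_mul_star_mul_self hε]
      _ = ε • (u - v) := by
          rw [mul_smul_comm, smul_mul_assoc, ← smul_sub]
          congr 1
          noncomm_ring
  rw [compress, inv_smul_smul₀ hε.ne']

lemma norm_star_mul_self_sub_star_mul_self_le (a b : 𝒜) :
    ‖star b * b - star a * a‖ ≤ (‖b‖ + ‖a‖) * ‖a - b‖ :=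
  calc ‖star b * b - star a * a‖ = ‖star b * (b - a) + star (b - a) * a‖ := by
        rw [star_sub]; congr 1; noncomm_ring
    _ ≤ ‖star b‖ * ‖b - a‖ + ‖star (b - a)‖ * ‖a‖ :=
        norm_add_le_of_le (norm_mul_le _ _) (norm_mul_le _ _)
    _ = (‖b‖ + ‖a‖) * ‖a - b‖ := by rw [norm_star, norm_star, norm_sub_rev b a]; ring

lemma norm_rightSupportApprox_sub_le (hε : 0 < ε) (a b : 𝒜) :
    ‖rightSupportApprox ε b - rightSupportApprox ε a‖ ≤ ε⁻¹ * ((‖b‖ + ‖a‖) * ‖a - b‖) := by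
  rw [rightSupportApprox_sub_rightSupportApprox hε, norm_smul, norm_inv,
    Real.norm_of_nonneg hε.le]
  gcongr
  simpa using norm_mul_le_of_le
    (norm_mul_le_of_le (norm_one_sub_rightSupportApprox_le_one hε a)
      (norm_star_mul_self_sub_star_mul_self_le a b))
    (norm_one_sub_rightSupportApprox_le_one hε b)

lemma exists_rightSupportApprox_eq_mul (hε : 0 < ε) (a : 𝒜) :
    ∃ c, rightSupportApprox ε a = c * a := by
  refine ⟨ε⁻¹ • ((1 - rightSupportApprox ε a) * star a), ?_⟩
  rw [smul_mul_assoc, mul_assoc, one_sub_rightSupportApprox_mul_star_mul_self hε,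
    inv_smul_smul₀ hε.ne']

variable {ι : Type*} {l : Filter ι} {b : ι → 𝒜} {ε : ι → ℝ}

lemma isLittleO_mul_one_sub_rightSupportApprox {w : ι → ℝ} (hε : ∀ i, 0 < ε i)
    (hb : (fun i => a - b i) =o[l] w) (hεw : ε =o[l] fun i => w i ^ 2) :
    (fun i => a * (1 - rightSupportApprox (ε i) (b i))) =o[l] w := by
  have sqrt_isLittleO : (fun i => √(ε i)) =o[l] w :=
    IsLittleO.of_pow (hεw.congr_left fun i => (Real.sq_sqrt (hε i).le).symm) two_ne_zero
  exact (IsBigO.of_norm_le fun i => norm_mul_one_sub_rightSupportApprox_le_add (hε i) a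
    (b i)).trans_isLittleO (hb.norm_left.add sqrt_isLittleO)

lemma tendsto_rightSupportApprox_sub {C : ℝ} (hε : ∀ i, 0 < ε i) (hC : ∀ i, ‖b i‖ ≤ C)
    (hb : (fun i => a - b i) =o[l] ε) :
    Tendsto (fun i => rightSupportApprox (ε i) (b i) - rightSupportApprox (ε i) a) l (𝓝 0) := by
  have bound_tendsto : Tendsto (fun i => (C + ‖a‖) * (‖a - b i‖ / ε i)) l (𝓝 0) := by
    simpa using hb.norm_left.tendsto_div_nhds_zero.const_mul (C + ‖a‖)
  refine squeeze_zero_norm (fun i => ?_) bound_tendsto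
  calc _ ≤ (ε i)⁻¹ * ((‖b i‖ + ‖a‖) * ‖a - b i‖) := norm_rightSupportApprox_sub_le (hε i) a (b i)
    _ ≤ (ε i)⁻¹ * ((C + ‖a‖) * ‖a - b i‖) := by have := (hε i).le; gcongr; exact hC i
    _ = (C + ‖a‖) * (‖a - b i‖ / ε i) := by ring

end RightSupportApprox

/-- A sequence of conditional expectations onto an increasing sequence of unital `*`-subalgebras.
Only the right module property is recorded, the left one being its adjoint. -/
structure IsExpectationTower [NormedRing 𝒜] [StarRing 𝒜] [NormedAlgebra ℂ 𝒜]
    (E : ℕ → 𝒜 →ₗ[ℂ] 𝒜) : Prop where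
  norm_map_le (N : ℕ) (x : 𝒜) : ‖E N x‖ ≤ ‖x‖
  map_star (N : ℕ) (x : 𝒜) : E N (star x) = star (E N x)
  map_map (N M : ℕ) (x : 𝒜) : E N (E M x) = E (min N M) x
  map_mul_map (N : ℕ) (x y : 𝒜) : E N (x * E N y) = E N x * E N y
  map_one (N : ℕ) : E N 1 = 1

namespace IsExpectationTower

section NormedRing

variable [NormedRing 𝒜] [StarRing 𝒜] [NormedAlgebra ℂ 𝒜] {E : ℕ → 𝒜 →ₗ[ℂ] 𝒜} {N : ℕ} {x y : 𝒜}

lemma map_self (hE : IsExpectationTower E) (N : ℕ) (x : 𝒜) : E N (E N x) = E N x := by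
  rw [hE.map_map, min_self]

lemma map_eq_self_of_le (hE : IsExpectationTower E) {M : ℕ} (hNM : N ≤ M) (hx : E N x = x) :
    E M x = x := by
  rw [← hx, hE.map_map, min_eq_right hNM]

lemma map_mul_of_map_eq_self (hE : IsExpectationTower E) (hy : E N y = y) (x : 𝒜) :
    E N (x * y) = E N x * y := by
  simpa only [hy] using hE.map_mul_map N x y

lemma continuous (hE : IsExpectationTower E) (N : ℕ) : Continuous (E N) :=
  AddMonoidHomClass.continuous_of_bound (E N) 1 fun x => by simpa using hE.norm_map_le N x

/-- The range of `E N`, described as its set of fixed points. -/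
def fixedStarSubalgebra [StarModule ℂ 𝒜] (hE : IsExpectationTower E) (N : ℕ) :
    StarSubalgebra ℂ 𝒜 where
  carrier := {x | E N x = x}
  mul_mem' {x y} (hx : E N x = x) (hy : E N y = y) :=
    (hE.map_mul_of_map_eq_self hy x).trans (by rw [hx])
  add_mem' {x y} (hx : E N x = x) (hy : E N y = y) := (map_add _ _ _).trans (by rw [hx, hy])
  algebraMap_mem' r := by
    simp only [Set.mem_ofPred_eq, Algebra.algebraMap_eq_smul_one, map_smul, hE.map_one]
  star_mem' {x} (hx : E N x = x) := (hE.map_star N x).trans (by rw [hx])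

lemma isClosed_fixedStarSubalgebra [StarModule ℂ 𝒜] (hE : IsExpectationTower E) (N : ℕ) :
    IsClosed (hE.fixedStarSubalgebra N : Set 𝒜) :=
  isClosed_eq (hE.continuous N) continuous_id

end NormedRing

lemma map_rightSupportApprox [CStarAlgebra 𝒜] {E : ℕ → 𝒜 →ₗ[ℂ] 𝒜} (hE : IsExpectationTower E)
    (ε : ℝ) {N : ℕ} {b : 𝒜} (hb : E N b = b) :
    E N (rightSupportApprox ε b) = rightSupportApprox ε b := by
  have hb' : b ∈ hE.fixedStarSubalgebra N := hb
  have := hE.isClosed_fixedStarSubalgebra N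
  exact cfc_mem (s := hE.fixedStarSubalgebra N) _ (mul_mem (star_mem hb') hb')

end IsExpectationTower

section QuasiLocalNorm

variable {g : ℝ → ℝ}

lemma isBigO_of_memDf [NormedRing 𝒜] [NormedAlgebra ℂ 𝒜] {E : ℕ → 𝒜 →ₗ[ℂ] 𝒜} {f : ℝ → ℝ} {a : 𝒜}
    (hf : ∀ t, 0 < t → 0 < f t) (ha : memDf E f a) :
    (fun N => a - E N a) =O[atTop] fun N : ℕ => f N := by
  obtain ⟨C, hC⟩ := ha
  refine IsBigO.of_bound C ?_
  filter_upwards [eventually_ge_atTop 1] with N hN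
  have hfN : 0 < f N := hf N (by exact_mod_cast hN)
  rw [Real.norm_of_nonneg hfN.le, ← div_le_iff₀ hfN]
  exact hC ⟨N, hN, rfl⟩

lemma fnorm_nonneg_s11 [NormedRing 𝒜] [NormedAlgebra ℂ 𝒜] (E : ℕ → 𝒜 →ₗ[ℂ] 𝒜)
    (hg : ∀ t, 0 < t → 0 < g t) (x : 𝒜) : 0 ≤ fnorm E g x := by
  refine add_nonneg (norm_nonneg x) (Real.sSup_nonneg ?_)
  rintro _ ⟨N, hN, rfl⟩
  exact div_nonneg (norm_nonneg _) (hg N (by exact_mod_cast hN)).le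

lemma fnorm_le_of_forall_norm_sub_le [NormedRing 𝒜] [NormedAlgebra ℂ 𝒜] {E : ℕ → 𝒜 →ₗ[ℂ] 𝒜}
    {x : 𝒜} {r : ℝ} (hg : ∀ t, 0 < t → 0 < g t) (hr : 0 ≤ r)
    (hx : ∀ M : ℕ, 1 ≤ M → ‖x - E M x‖ ≤ r * g M) : fnorm E g x ≤ ‖x‖ + r := by
  refine add_le_add le_rfl (Real.sSup_le ?_ hr)
  rintro _ ⟨M, hM, rfl⟩
  exact (div_le_iff₀ (hg M (by exact_mod_cast hM))).mpr (hx M hM)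

variable [NormedRing 𝒜] [StarRing 𝒜] [NormedAlgebra ℂ 𝒜] {E : ℕ → 𝒜 →ₗ[ℂ] 𝒜} {a : 𝒜}

/- Levels `M ≥ N` see `c` as a scalar, so they only feel the locality of `a`; at the finitely many
levels below `N` the smallness of `a * c` takes over. -/
lemma IsExpectationTower.fnorm_mul_le (hE : IsExpectationTower E) (hg : ∀ t, 0 < t → 0 < g t)
    (hg_anti : AntitoneOn g (Set.Ioi 0)) {c : 𝒜} {N : ℕ} {r : ℝ} (hr : 0 ≤ r)
    (hc : E N c = c) (hc_norm : ‖c‖ ≤ 1) (hac : 2 * ‖a * c‖ ≤ r * g N)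
    (ha : ∀ M, N ≤ M → ‖a - E M a‖ ≤ r * g M) :
    fnorm E g (a * c) ≤ ‖a * c‖ + r := by
  refine fnorm_le_of_forall_norm_sub_le hg hr fun M hM => ?_
  rcases le_or_gt N M with hNM | hMN
  · calc ‖a * c - E M (a * c)‖ = ‖(a - E M a) * c‖ := by
          rw [hE.map_mul_of_map_eq_self (hE.map_eq_self_of_le hNM hc), sub_mul]
      _ ≤ ‖a - E M a‖ * 1 := norm_mul_le_of_le le_rfl hc_norm
      _ ≤ r * g M := by rw [mul_one]; exact ha M hNM
  · have hM_pos : (0 : ℝ) < M := by exact_mod_cast hM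
    have hMN' : (M : ℝ) < N := by exact_mod_cast hMN
    calc ‖a * c - E M (a * c)‖ ≤ ‖a * c‖ + ‖E M (a * c)‖ := norm_sub_le _ _
      _ ≤ 2 * ‖a * c‖ := by linarith [hE.norm_map_le M (a * c)]
      _ ≤ r * g N := hac
      _ ≤ r * g M := by gcongr; exact hg_anti hM_pos (hM_pos.trans hMN') hMN'.le

lemma isBigO_one_of_antitoneOn (hg : ∀ t, 0 < t → 0 < g t) (hg_anti : AntitoneOn g (Set.Ioi 0)) :
    (fun N : ℕ => g N) =O[atTop] fun _ => (1 : ℝ) := by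
  refine IsBigO.of_bound (g 1) ?_
  filter_upwards [eventually_ge_atTop 1] with N hN
  have hN' : (1 : ℝ) ≤ N := by exact_mod_cast hN
  have hN_pos : (0 : ℝ) < N := by linarith
  simpa [abs_of_pos (hg N hN_pos)] using hg_anti (Set.mem_Ioi.mpr one_pos) hN_pos hN'

lemma IsExpectationTower.tendsto_fnorm_mul (hE : IsExpectationTower E)
    (hg : ∀ t, 0 < t → 0 < g t) (hg_anti : AntitoneOn g (Set.Ioi 0)) {c : ℕ → 𝒜}
    (hc : ∀ N, E N (c N) = c N) (hc_norm : ∀ N, ‖c N‖ ≤ 1)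
    (ha : (fun N => a - E N a) =o[atTop] fun N : ℕ => g N)
    (hac : (fun N => a * c N) =o[atTop] fun N : ℕ => g N) :
    Tendsto (fun N => fnorm E g (a * c N)) atTop (𝓝 0) := by
  have norm_tendsto : Tendsto (fun N => ‖a * c N‖) atTop (𝓝 0) :=
    ((isLittleO_one_iff ℝ).mp
      (hac.trans_isBigO (isBigO_one_of_antitoneOn hg hg_anti))).norm.trans (by simp)
  have fnorm_le (r : ℝ) (hr : 0 < r) : ∀ᶠ N in atTop, fnorm E g (a * c N) ≤ ‖a * c N‖ + r := by
    filter_upwards [eventually_ge_atTop 1, hac.def (half_pos hr),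
      eventually_forall_ge_atTop.mpr (ha.def hr)] with N hN hacN haN
    have norm_g (M : ℕ) (hM : N ≤ M) : ‖g M‖ = g M :=
      Real.norm_of_nonneg (hg M (by exact_mod_cast hN.trans hM)).le
    rw [norm_g N le_rfl] at hacN
    exact hE.fnorm_mul_le hg hg_anti hr.le (hc N) (hc_norm N) (by linarith)
      fun M hM => norm_g M hM ▸ haN M hM
  refine tendsto_order.mpr ⟨fun r hr => .of_forall fun N => hr.trans_le (fnorm_nonneg_s11 E hg _),
    fun r hr => ?_⟩
  filter_upwards [fnorm_le (r / 2) (half_pos hr), norm_tendsto.eventually_lt_const (half_pos hr)]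
    with N hN hN'
  linarith

end QuasiLocalNorm

lemma exists_pos_isLittleO_isLittleO {F : Type*} [NormedAddCommGroup F] {d : ℕ → F} {w : ℕ → ℝ}
    (hw : ∀ᶠ n in atTop, 0 < w n) (hd : d =o[atTop] w) :
    ∃ ε : ℕ → ℝ, (∀ n, 0 < ε n) ∧ d =o[atTop] ε ∧ ε =o[atTop] w := by
  -- The geometric mean of `‖d‖` and `w`, with a second term for the indices where `d` vanishes.
  let r : ℕ → ℝ := fun n => √‖d n‖ * √(w n) + 1 / (n + 1) * w n
  have sqrt_isLittleO : (fun n => √‖d n‖) =o[atTop] fun n => √(w n) :=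
    hd.norm_left.sqrt (hw.mono fun _ h => h.le)
  have d_isLittleO : d =o[atTop] r :=
    calc d =O[atTop] fun n => √‖d n‖ * √‖d n‖ := .of_norm_le fun n => by simp
      _ =o[atTop] fun n => √‖d n‖ * √(w n) := (isBigO_refl _ _).mul_isLittleO sqrt_isLittleO
      _ =O[atTop] r := .of_norm_eventuallyLE <| hw.mono fun n hn => by
          simp only [r]
          rw [Real.norm_of_nonneg (by positivity)]
          exact le_add_of_nonneg_right (by positivity)
  have r_isLittleO : r =o[atTop] w := by
    refine IsLittleO.add ?_ ?_
    · refine (sqrt_isLittleO.mul_isBigO (isBigO_refl _ _)).congr' .rfl ?_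
      exact hw.mono fun n hn => Real.mul_self_sqrt hn.le
    · simpa using ((isLittleO_one_iff ℝ).mpr
        tendsto_one_div_add_atTop_nhds_zero_nat).mul_isBigO (isBigO_refl w atTop)
  have r_eq : r =ᶠ[atTop] fun n => if 0 < w n then r n else 1 :=
    hw.mono fun n hn => (if_pos hn).symm
  refine ⟨_, fun n => ?_, d_isLittleO.congr' .rfl r_eq, r_isLittleO.congr' r_eq .rfl⟩
  split_ifs <;> positivity

lemma isLittleO_exp_neg_rpow_exp_neg_rpow_sq {α β : ℝ} (hα : 0 < α) (hαβ : α < β) :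
    (fun N : ℕ => Real.exp (-(N : ℝ) ^ β)) =o[atTop] fun N => Real.exp (-(N : ℝ) ^ α) ^ 2 := by
  have factored : Tendsto (fun x : ℝ => x ^ α * (x ^ (β - α) - 2)) atTop atTop :=
    (tendsto_rpow_atTop hα).atTop_mul_atTop₀
      (tendsto_atTop_add_const_right _ _ (tendsto_rpow_atTop (sub_pos.mpr hαβ)))
  have difference : Tendsto (fun x : ℝ => x ^ β - 2 * x ^ α) atTop atTop := by
    refine factored.congr' ?_
    filter_upwards [eventually_gt_atTop 0] with x hx
    rw [mul_sub, ← Real.rpow_add hx, add_sub_cancel, mul_comm (2 : ℝ)]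
  simp only [← Real.exp_nat_mul, Real.isLittleO_exp_comp_exp_comp]
  refine (difference.comp tendsto_natCast_atTop_atTop).congr fun N => ?_
  simp only [Function.comp_apply]
  push_cast
  ring

open scoped ComplexOrder in
theorem stmt_11_general [CStarAlgebra 𝒜] [PartialOrder 𝒜] [StarOrderedRing 𝒜]
    {E : ℕ → 𝒜 →ₗ[ℂ] 𝒜} (hE : IsExpectationTower E) (φ : 𝒜 →ₚ[ℂ] ℂ) {g : ℝ → ℝ}
    (hg : ∀ t, 0 < t → 0 < g t) (hg_anti : AntitoneOn g (Set.Ioi 0))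
    {A : 𝒜} (hA : φ (star A * A) = 0)
    (hA_loc : (fun N => A - E N A) =o[atTop] fun N : ℕ => g N ^ 2) :
    ∃ u : ℕ → 𝒜,
      (∀ N : ℕ, E N (u N) = u N ∧ 0 ≤ u N ∧ u N ≤ 1) ∧
      Tendsto (fun N => fnorm E g (A * (1 - u N))) atTop (𝓝 0) ∧
      Tendsto (fun N => φ (u N)) atTop (𝓝 0) ∧
      Tendsto (fun N => Metric.infDist (u N) {x : 𝒜 | φ (star x * x) = 0}) atTop (𝓝 0) := by
  have hg_sq : ∀ᶠ N : ℕ in atTop, 0 < g N ^ 2 := by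
    filter_upwards [eventually_gt_atTop 0] with N hN
    exact pow_pos (hg N (by exact_mod_cast hN)) 2
  obtain ⟨ε, hε, hA_ε, hε_g⟩ := exists_pos_isLittleO_isLittleO hg_sq hA_loc
  let u N := rightSupportApprox (ε N) (E N A)
  let v N := rightSupportApprox (ε N) A
  have hu N : E N (u N) = u N := hE.map_rightSupportApprox (ε N) (hE.map_self N A)
  have huv : Tendsto (fun N => u N - v N) atTop (𝓝 0) :=
    tendsto_rightSupportApprox_sub hε (fun N => hE.norm_map_le N A) hA_ε
  have hA_g : (fun N => A - E N A) =o[atTop] fun N : ℕ => g N :=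
    hA_loc.trans_isBigO <| by
      simpa [sq] using (isBigO_refl (fun N : ℕ => g N) atTop).mul
        (isBigO_one_of_antitoneOn hg hg_anti)
  have hv N : ∃ c, v N = c * A := exists_rightSupportApprox_eq_mul (hε N) A
  refine ⟨u, fun N => ⟨hu N, rightSupportApprox_nonneg (hε N) _,
    rightSupportApprox_le_one (hε N) _⟩, ?_, ?_, ?_⟩
  · exact hE.tendsto_fnorm_mul hg hg_anti (fun N => by rw [map_sub, hE.map_one, hu])
      (fun N => norm_one_sub_rightSupportApprox_le_one (hε N) _) hA_g
      (isLittleO_mul_one_sub_rightSupportApprox hε hA_g hε_g)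
  · have hφv N : φ (v N) = 0 := by
      obtain ⟨c, hc⟩ := hv N
      rw [hc, map_mul_eq_zero_of_map_star_mul_self_eq_zero φ hA]
    have hφ : Continuous φ := map_continuous φ
    simpa [Function.comp_def, hφv] using (hφ.tendsto 0).comp huv
  · have hv_mem N : φ (star (v N) * v N) = 0 := by
      obtain ⟨c, hc⟩ := hv N
      rw [hc, map_star_mul_self_mul_left_eq_zero φ hA]
    refine squeeze_zero (fun _ => Metric.infDist_nonneg) (fun N => ?_)
      (tendsto_zero_iff_norm_tendsto_zero.mp huv)
    rw [← dist_eq_norm]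
    exact Metric.infDist_le_dist_of_mem (hv_mem N)

theorem stmt_11 [NormedRing 𝒜] [StarRing 𝒜] [CStarRing 𝒜] [CompleteSpace 𝒜]
    [NormedAlgebra ℂ 𝒜] [StarModule ℂ 𝒜] [PartialOrder 𝒜] [StarOrderedRing 𝒜]
    (E : ℕ → 𝒜 →ₗ[ℂ] 𝒜)
    (hE_norm : ∀ (N : ℕ) (x : 𝒜), ‖E N x‖ ≤ ‖x‖)
    (hE_star : ∀ (N : ℕ) (x : 𝒜), E N (star x) = star (E N x))
    (hE_comp : ∀ (N M : ℕ) (x : 𝒜), E N (E M x) = E (min N M) x)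
    (hE_mul₁ : ∀ (N : ℕ) (x y : 𝒜), E N (E N x * y) = E N x * E N y)
    (hE_mul₂ : ∀ (N : ℕ) (x y : 𝒜), E N (x * E N y) = E N x * E N y)
    (hE_unital : ∀ N : ℕ, E N 1 = 1)
    (hE_pos : ∀ (N : ℕ) (x : 𝒜), 0 ≤ x → 0 ≤ E N x)
    (φ : 𝒜 →ₗ[ℂ] ℂ) (hφ_cont : Continuous φ) (hφ_one : φ 1 = 1)
    (hφ_pos : ∀ x : 𝒜, 0 ≤ (φ (star x * x)).re ∧ (φ (star x * x)).im = 0)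
    (β₂ β₄ : ℝ) (hβ₄ : 0 < β₄) (hβ₄₂ : β₄ < β₂) (hβ₂ : β₂ < 1)
    (A : 𝒜) (hA_L : φ (star A * A) = 0)
    (hA_Df : memDf E (fun t => Real.exp (-t ^ β₂)) A) :
    ∃ u : ℕ → 𝒜,
      (∀ N : ℕ, E N (u N) = u N ∧ 0 ≤ u N ∧ u N ≤ 1) ∧
      Tendsto (fun N => fnorm E (fun t => Real.exp (-t ^ β₄)) (A * (1 - u N)))
        atTop (nhds 0) ∧
      Tendsto (fun N => φ (u N)) atTop (nhds 0) ∧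
      Tendsto (fun N => Metric.infDist (u N) {x : 𝒜 | φ (star x * x) = 0})
        atTop (nhds 0) := by
  let : CStarAlgebra 𝒜 := {}
  obtain ⟨ψ, rfl⟩ := exists_positiveLinearMap_toLinearMap_eq φ hφ_pos
  have hE : IsExpectationTower E := ⟨hE_norm, hE_star, hE_comp, hE_mul₂, hE_unital⟩
  have hg_anti : AntitoneOn (fun t : ℝ => Real.exp (-t ^ β₄)) (Set.Ioi 0) := fun s hs t _ hst =>
    Real.exp_le_exp.mpr (neg_le_neg (Real.rpow_le_rpow (le_of_lt hs) hst hβ₄.le))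
  exact stmt_11_general hE ψ (fun _ _ => Real.exp_pos _) hg_anti hA_L
    ((isBigO_of_memDf (fun _ _ => Real.exp_pos _) hA_Df).trans_isLittleO
      (isLittleO_exp_neg_rpow_exp_neg_rpow_sq hβ₄ hβ₄₂))
end

section
/- Let (τ^t)_{t∈ℝ} be a family of linear maps 𝒜 → 𝒜 with ‖τ^t(x)‖ ≤ ‖x‖ for all x, t, such that for each A ∈ 𝒜 the map t ↦ τ^t(A) is norm-continuous, and suppose there are constants C₁ ≥ 0, v > 0, ν ∈ ℕ such that for all t ∈ ℝ, all integers M ≤ N, and all B ∈ 𝒜 with E_M(B) = B: ‖τ^t(B) − E_N(τ^t(B))‖ ≤ C₁·(2M+1)^ν·e^{v|t| − (N−M)}·‖B‖. Let ω : ℝ → [0,∞) be an even Lebesgue-integrable function with ∫_ℝ ω(t) dt = 1, and set W(x) := ∫_x^∞ ω(t) dt for x ≥ 0. Let f, f₁ : (0,∞) → (0,∞) be continuous decreasing with limit 0 at infinity such that sup_{N∈ℕ} f(N−⌊N/2⌋)/f₁(N) < ∞, sup_{N∈ℕ} (2N+1)^ν·e^{−⌊N/2⌋/2}/f₁(N)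 < ∞, and sup_{N∈ℕ} W(⌊N/2⌋/(2v))/f₁(N) < ∞. Then for every A ∈ D_f the Bochner integral I(A) := ∫_ℝ ω(t)·τ^t(A) dt exists in 𝒜, and I(A) ∈ D_{f₁}. -/
open Filter

variable {𝒜 : Type*}

open MeasureTheory

/-!
Fix `N`, put `m = ⌊N/2⌋` and compare `A` with its localization `B = E_{N-m}(A)`. The defect
`x - E_N(x)` of `x = τ^t(A)` is at most `2 ‖A - B‖` plus that of `τ^t(B)`, which inside the light
cone `|t| ≤ m/(2v)` is at most `C₁ (2N+1)^ν e^{-m/2} ‖A‖`. Outside it the defect is at most `2 ‖A‖`,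
and `ω` has mass `2 W(m/(2v))` there. Integrating against `ω` bounds the defect of `I(A)` by a
combination of the three quantities that are `O(f₁(N))`.
-/

theorem bddAbove_div_iff_exists_le_mul {ι : Type*} {p : ι → Prop} {g h : ι → ℝ}
    (hh : ∀ i, p i → 0 < h i) :
    BddAbove {r : ℝ | ∃ i, p i ∧ r = g i / h i} ↔ ∃ C, 0 ≤ C ∧ ∀ i, p i → g i ≤ C * h i := by
  constructor
  · rintro ⟨C, hC⟩
    refine ⟨max C 0, le_max_right C 0, fun i hi => ?_⟩
    rw [← div_le_iff₀ (hh i hi)]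
    exact (hC ⟨i, hi, rfl⟩).trans (le_max_left C 0)
  · rintro ⟨C, -, hC⟩
    refine ⟨C, ?_⟩
    rintro _ ⟨i, hi, rfl⟩
    exact (div_le_iff₀ (hh i hi)).2 (hC i hi)

theorem setIntegral_lt_abs_eq_two_mul_of_even {ω : ℝ → ℝ} (hω_even : ∀ t, ω (-t) = ω t)
    {a : ℝ} (ha : 0 ≤ a) :
    ∫ t in {t : ℝ | a < |t|}, ω t = 2 * ∫ t in Set.Ioi a, ω t := by
  have hω_abs (t : ℝ) : ω |t| = ω t := by rcases abs_choice t with h | h <;> simp only [h, hω_even]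
  have hind (t : ℝ) : {t : ℝ | a < |t|}.indicator ω t = (Set.Ioi a).indicator ω |t| := by
    simp only [Set.indicator_apply, Set.mem_ofPred_eq, Set.mem_Ioi, hω_abs]
  calc ∫ t in {t : ℝ | a < |t|}, ω t
      = ∫ t, (Set.Ioi a).indicator ω |t| := by
        rw [← integral_indicator (isOpen_lt continuous_const continuous_abs).measurableSet]
        exact integral_congr_ae (Eventually.of_forall hind)
    _ = 2 * ∫ t in Set.Ioi 0, (Set.Ioi a).indicator ω t := integral_comp_abs
    _ = 2 * ∫ t in Set.Ioi a, ω t := by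
        rw [setIntegral_indicator measurableSet_Ioi,
          Set.inter_eq_right.2 (Set.Ioi_subset_Ioi ha)]

theorem norm_sub_le_two_mul_of_norm_le {V : Type*} [SeminormedAddCommGroup V] {x y : V}
    (h : ‖y‖ ≤ ‖x‖) : ‖x - y‖ ≤ 2 * ‖x‖ := by
  linarith [norm_sub_le x y]

section NormedSpace

variable {V : Type*} [NormedAddCommGroup V] [NormedSpace ℝ V]

theorem norm_integral_smul_le_of_norm_le_on_off {α : Type*} [MeasurableSpace α] {μ : Measure α}
    {ω : α → ℝ} (hω_nonneg : ∀ t, 0 ≤ ω t) (hω_int : Integrable ω μ) {u : α → V} {s : Set α}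
    (hs : MeasurableSet s) {b c : ℝ} (hb : 0 ≤ b)
    (hu_off : ∀ t ∉ s, ‖u t‖ ≤ b) (hu_on : ∀ t ∈ s, ‖u t‖ ≤ c) :
    ‖∫ t, ω t • u t ∂μ‖ ≤ b * (∫ t, ω t ∂μ) + c * ∫ t in s, ω t ∂μ := by
  have hω_ind : Integrable (s.indicator ω) μ := hω_int.indicator hs
  have hbound (t : α) : ‖ω t • u t‖ ≤ b * ω t + c * s.indicator ω t := by
    rw [norm_smul, Real.norm_of_nonneg (hω_nonneg t)]
    by_cases ht : t ∈ s
    · rw [Set.indicator_of_mem ht]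
      linarith [mul_le_mul_of_nonneg_left (hu_on t ht) (hω_nonneg t),
        mul_nonneg hb (hω_nonneg t)]
    · rw [Set.indicator_of_notMem ht]
      linarith [mul_le_mul_of_nonneg_left (hu_off t ht) (hω_nonneg t)]
  calc ‖∫ t, ω t • u t ∂μ‖
      ≤ ∫ t, (b * ω t + c * s.indicator ω t) ∂μ :=
        norm_integral_le_of_norm_le ((hω_int.const_mul b).add (hω_ind.const_mul c))
          (Eventually.of_forall hbound)
    _ = b * (∫ t, ω t ∂μ) + c * ∫ t in s, ω t ∂μ := by
        rw [integral_add (hω_int.const_mul b) (hω_ind.const_mul c), integral_const_mul,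
          integral_const_mul, integral_indicator hs]

theorem integral_smul_sub_apply_integral [CompleteSpace V] {α : Type*} [MeasurableSpace α]
    {μ : Measure α} {ω : α → ℝ} {u : α → V} (hu : Integrable (fun t => ω t • u t) μ)
    (P : V →L[ℝ] V) :
    (∫ t, ω t • u t ∂μ) - P (∫ t, ω t • u t ∂μ) = ∫ t, ω t • (u t - P (u t)) ∂μ := by
  simpa only [sub_apply, ContinuousLinearMap.id_apply, map_smul, smul_sub]
    using ((ContinuousLinearMap.id ℝ V - P).integral_comp_comm hu).symm

theorem norm_map_sub_apply_map_le {T P : V →ₗ[ℝ] V} (hT : ∀ x, ‖T x‖ ≤ ‖x‖)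
    (hP : ∀ x, ‖P x‖ ≤ ‖x‖) (x y : V) :
    ‖T x - P (T x)‖ ≤ 2 * ‖x - y‖ + ‖T y - P (T y)‖ := by
  have hsplit : T x - P (T x) = (T (x - y) - P (T (x - y))) + (T y - P (T y)) := by
    simp only [map_sub]; abel
  calc ‖T x - P (T x)‖
      ≤ ‖T (x - y) - P (T (x - y))‖ + ‖T y - P (T y)‖ := hsplit ▸ norm_add_le _ _
    _ ≤ 2 * ‖x - y‖ + ‖T y - P (T y)‖ := by
        linarith [norm_sub_le_two_mul_of_norm_le (hP (T (x - y))), hT (x - y)]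

/-- `A` is quasi-local at rate `f` for the localization maps `E`: the condition `A ∈ D_f`, read in
a normed space. As in `memDf`, the index starts at `N = 1` because `f` lives on `(0, ∞)`. -/
def IsQuasiLocal (E : ℕ → V →ₗ[ℝ] V) (f : ℝ → ℝ) (A : V) : Prop :=
  BddAbove {r : ℝ | ∃ N : ℕ, 1 ≤ N ∧ r = ‖A - E N A‖ / f N}

/-- The Lieb–Robinson bound for the dynamics `τ` relative to the localization maps `E`: an element
localized in region `M` stays localized in region `N ≥ M` up to an error `e^{v|t| - (N - M)}`, with
velocity `v` and a prefactor of degree `ν` in the size `2M + 1` of the region. -/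
def LiebRobinsonBound (E : ℕ → V →ₗ[ℝ] V) (τ : ℝ → V →ₗ[ℝ] V) (C v : ℝ) (ν : ℕ) : Prop :=
  ∀ (t : ℝ) (M N : ℕ), M ≤ N → ∀ B : V, E M B = B →
    ‖τ t B - E N (τ t B)‖ ≤
      C * (2 * (M : ℝ) + 1) ^ ν * Real.exp (v * |t| - ((N : ℝ) - (M : ℝ))) * ‖B‖

section Dynamics

variable {E : ℕ → V →ₗ[ℝ] V} {τ : ℝ → V →ₗ[ℝ] V}

theorem LiebRobinsonBound.norm_sub_le_of_abs_le {C v : ℝ} {ν : ℕ}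
    (h : LiebRobinsonBound E τ C v ν) (hC : 0 ≤ C) (hv : 0 < v) {m N : ℕ} (hm : m ≤ N)
    {B : V} (hB : E (N - m) B = B) {t : ℝ} (ht : |t| ≤ m / (2 * v)) :
    ‖τ t B - E N (τ t B)‖ ≤ C * (2 * (N : ℝ) + 1) ^ ν * Real.exp (-(m : ℝ) / 2) * ‖B‖ := by
  have hcone : v * |t| ≤ m / 2 := by
    calc v * |t| ≤ v * (m / (2 * v)) := by gcongr
      _ = m / 2 := by field_simp
  have hexponent : v * |t| - ((N : ℝ) - ((N - m : ℕ) : ℝ)) ≤ -(m : ℝ) / 2 := by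
    rw [Nat.cast_sub hm]; linarith
  refine (h t (N - m) N (Nat.sub_le N m) B hB).trans ?_
  gcongr
  exact Nat.sub_le N m

variable [CompleteSpace V] {ω : ℝ → ℝ}

theorem norm_integral_smul_sub_apply_le_of_abs_le {P : V →ₗ[ℝ] V} (hP : ∀ x, ‖P x‖ ≤ ‖x‖)
    (hτ_contr : ∀ t x, ‖τ t x‖ ≤ ‖x‖) {A : V} (hτ_cont : Continuous fun t => τ t A)
    (hω_nonneg : ∀ t, 0 ≤ ω t) (hω_even : ∀ t, ω (-t) = ω t) (hω_int : Integrable ω)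
    {B : V} {a δ : ℝ} (ha : 0 ≤ a) (hB : ∀ t, |t| ≤ a → ‖τ t B - P (τ t B)‖ ≤ δ) :
    ‖(∫ t, ω t • τ t A) - P (∫ t, ω t • τ t A)‖ ≤
      (2 * ‖A - B‖ + δ) * (∫ t, ω t) + 4 * ‖A‖ * ∫ t in Set.Ioi a, ω t := by
  have hδ : 0 ≤ δ := (norm_nonneg _).trans (hB 0 (by rwa [abs_zero]))
  have hinside : ∀ t ∉ {t : ℝ | a < |t|}, ‖τ t A - P (τ t A)‖ ≤ 2 * ‖A - B‖ + δ := fun t ht =>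
    (norm_map_sub_apply_map_le (hτ_contr t) hP A B).trans (by gcongr; exact hB t (not_lt.1 ht))
  have houtside : ∀ t ∈ {t : ℝ | a < |t|}, ‖τ t A - P (τ t A)‖ ≤ 2 * ‖A‖ := fun t _ =>
    (norm_sub_le_two_mul_of_norm_le (hP (τ t A))).trans (by gcongr; exact hτ_contr t A)
  have hτA_int : Integrable fun t => ω t • τ t A :=
    hω_int.smul_bdd ‖A‖ hτ_cont.aestronglyMeasurable (Eventually.of_forall fun t => hτ_contr t A)
  have hcomm : (∫ t, ω t • τ t A) - P (∫ t, ω t • τ t A) = ∫ t, ω t • (τ t A - P (τ t A)) :=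
    integral_smul_sub_apply_integral hτA_int
      (P.mkContinuous 1 fun x => by simpa only [one_mul] using hP x)
  calc ‖(∫ t, ω t • τ t A) - P (∫ t, ω t • τ t A)‖
      ≤ (2 * ‖A - B‖ + δ) * (∫ t, ω t) + 2 * ‖A‖ * ∫ t in {t : ℝ | a < |t|}, ω t := by
        rw [hcomm]
        exact norm_integral_smul_le_of_norm_le_on_off hω_nonneg hω_int
          (isOpen_lt continuous_const continuous_abs).measurableSet (by positivity) hinside houtside
    _ = (2 * ‖A - B‖ + δ) * (∫ t, ω t) + 4 * ‖A‖ * ∫ t in Set.Ioi a, ω t := by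
        rw [setIntegral_lt_abs_eq_two_mul_of_even hω_even ha]; ring

theorem LiebRobinsonBound.norm_integral_smul_sub_apply_le {C v : ℝ} {ν : ℕ}
    (h : LiebRobinsonBound E τ C v ν) (hC : 0 ≤ C) (hv : 0 < v)
    (hE_norm : ∀ N x, ‖E N x‖ ≤ ‖x‖) (hE_idem : ∀ N x, E N (E N x) = E N x)
    (hτ_contr : ∀ t x, ‖τ t x‖ ≤ ‖x‖) {A : V} (hτ_cont : Continuous fun t => τ t A)
    (hω_nonneg : ∀ t, 0 ≤ ω t) (hω_even : ∀ t, ω (-t) = ω t) (hω_int : Integrable ω)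
    {m N : ℕ} (hm : m ≤ N) :
    ‖(∫ t, ω t • τ t A) - E N (∫ t, ω t • τ t A)‖ ≤
      (2 * ‖A - E (N - m) A‖ + C * ‖A‖ * ((2 * (N : ℝ) + 1) ^ ν * Real.exp (-(m : ℝ) / 2))) *
          (∫ t, ω t) +
        4 * ‖A‖ * ∫ t in Set.Ioi ((m : ℝ) / (2 * v)), ω t := by
  refine norm_integral_smul_sub_apply_le_of_abs_le (hE_norm N) hτ_contr hτ_cont hω_nonneg hω_even
    hω_int (by positivity) fun t ht => ?_
  calc ‖τ t (E (N - m) A) - E N (τ t (E (N - m) A))‖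
      ≤ C * (2 * (N : ℝ) + 1) ^ ν * Real.exp (-(m : ℝ) / 2) * ‖E (N - m) A‖ :=
        h.norm_sub_le_of_abs_le hC hv hm (hE_idem (N - m) A) ht
    _ ≤ C * (2 * (N : ℝ) + 1) ^ ν * Real.exp (-(m : ℝ) / 2) * ‖A‖ := by
        gcongr; exact hE_norm (N - m) A
    _ = C * ‖A‖ * ((2 * (N : ℝ) + 1) ^ ν * Real.exp (-(m : ℝ) / 2)) := by ring

end Dynamics

theorem stmt_15_general [CompleteSpace V] (E : ℕ → V →ₗ[ℝ] V)
    (hE_norm : ∀ N x, ‖E N x‖ ≤ ‖x‖) (hE_idem : ∀ N x, E N (E N x) = E N x)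
    (τ : ℝ → V →ₗ[ℝ] V) (hτ_contr : ∀ t x, ‖τ t x‖ ≤ ‖x‖)
    (hτ_cont : ∀ A, Continuous fun t => τ t A)
    {C₁ v : ℝ} {ν : ℕ} (hC₁ : 0 ≤ C₁) (hv : 0 < v) (hτ_loc : LiebRobinsonBound E τ C₁ v ν)
    {ω : ℝ → ℝ} (hω_nonneg : ∀ t, 0 ≤ ω t) (hω_even : ∀ t, ω (-t) = ω t)
    (hω_int : Integrable ω)
    {f f₁ : ℝ → ℝ} (hf_pos : ∀ t, 0 < t → 0 < f t) (hf₁_pos : ∀ t, 0 < t → 0 < f₁ t)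
    (hK₁ : BddAbove {r : ℝ | ∃ N : ℕ, 1 ≤ N ∧
      r = f ((N : ℝ) - ((N / 2 : ℕ) : ℝ)) / f₁ N})
    (hK₂ : BddAbove {r : ℝ | ∃ N : ℕ, 1 ≤ N ∧
      r = (2 * (N : ℝ) + 1) ^ ν * Real.exp (-((N / 2 : ℕ) : ℝ) / 2) / f₁ N})
    (hK₃ : BddAbove {r : ℝ | ∃ N : ℕ, 1 ≤ N ∧
      r = (∫ t in Set.Ioi (((N / 2 : ℕ) : ℝ) / (2 * v)), ω t) / f₁ N})
    {A : V} (hA : IsQuasiLocal E f A) :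
    Integrable (fun t => ω t • τ t A) ∧ IsQuasiLocal E f₁ (∫ t, ω t • τ t A) := by
  have hf_nat (N : ℕ) (hN : 1 ≤ N) : 0 < f N := hf_pos N (Nat.cast_pos.2 hN)
  have hf₁_nat (N : ℕ) (hN : 1 ≤ N) : 0 < f₁ N := hf₁_pos N (Nat.cast_pos.2 hN)
  obtain ⟨K, hK_nonneg, hK⟩ := (bddAbove_div_iff_exists_le_mul hf_nat).1 hA
  obtain ⟨K₁, hK₁_nonneg, hK₁⟩ := (bddAbove_div_iff_exists_le_mul hf₁_nat).1 hK₁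
  obtain ⟨K₂, hK₂_nonneg, hK₂⟩ := (bddAbove_div_iff_exists_le_mul hf₁_nat).1 hK₂
  obtain ⟨K₃, hK₃_nonneg, hK₃⟩ := (bddAbove_div_iff_exists_le_mul hf₁_nat).1 hK₃
  have hω_mass : 0 ≤ ∫ t, ω t := integral_nonneg hω_nonneg
  refine ⟨hω_int.smul_bdd ‖A‖ (hτ_cont A).aestronglyMeasurable
      (Eventually.of_forall fun t => hτ_contr t A),
    (bddAbove_div_iff_exists_le_mul hf₁_nat).2
      ⟨(2 * (K * K₁) + C₁ * ‖A‖ * K₂) * (∫ t, ω t) + 4 * ‖A‖ * K₃, by positivity,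
        fun N hN => ?_⟩⟩
  have hA_approx : ‖A - E (N - N / 2) A‖ ≤ K * (K₁ * f₁ N) := by
    refine (hK (N - N / 2) (by lia)).trans ?_
    rw [Nat.cast_sub (Nat.div_le_self N 2)]
    gcongr
    exact hK₁ N hN
  calc ‖(∫ t, ω t • τ t A) - E N (∫ t, ω t • τ t A)‖
      ≤ _ := hτ_loc.norm_integral_smul_sub_apply_le hC₁ hv hE_norm hE_idem hτ_contr (hτ_cont A)
        hω_nonneg hω_even hω_int (Nat.div_le_self N 2)
    _ ≤ (2 * (K * (K₁ * f₁ N)) + C₁ * ‖A‖ * (K₂ * f₁ N)) * (∫ t, ω t) +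
          4 * ‖A‖ * (K₃ * f₁ N) := by
        gcongr (2 * ?_ + C₁ * ‖A‖ * ?_) * (∫ t, ω t) + 4 * ‖A‖ * ?_
        exacts [hK₂ N hN, hK₃ N hN]
    _ = ((2 * (K * K₁) + C₁ * ‖A‖ * K₂) * (∫ t, ω t) + 4 * ‖A‖ * K₃) * f₁ N := by ring

end NormedSpace

theorem stmt_15 [NormedRing 𝒜] [StarRing 𝒜] [CStarRing 𝒜] [CompleteSpace 𝒜]
    [NormedAlgebra ℂ 𝒜] [StarModule ℂ 𝒜]
    (E : ℕ → 𝒜 →ₗ[ℂ] 𝒜)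
    (hE_norm : ∀ (N : ℕ) (x : 𝒜), ‖E N x‖ ≤ ‖x‖)
    (hE_star : ∀ (N : ℕ) (x : 𝒜), E N (star x) = star (E N x))
    (hE_comp : ∀ (N M : ℕ) (x : 𝒜), E N (E M x) = E (min N M) x)
    (hE_mul₁ : ∀ (N : ℕ) (x y : 𝒜), E N (E N x * y) = E N x * E N y)
    (hE_mul₂ : ∀ (N : ℕ) (x y : 𝒜), E N (x * E N y) = E N x * E N y)
    (τ : ℝ → 𝒜 →ₗ[ℂ] 𝒜) (hτ_contr : ∀ (t : ℝ) (x : 𝒜), ‖τ t x‖ ≤ ‖x‖)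
    (hτ_cont : ∀ A : 𝒜, Continuous fun t : ℝ => τ t A)
    (C₁ : ℝ) (hC₁ : 0 ≤ C₁) (v : ℝ) (hv : 0 < v) (ν : ℕ)
    (hτ_loc : ∀ (t : ℝ) (M N : ℕ), M ≤ N → ∀ B : 𝒜, E M B = B →
      ‖τ t B - E N (τ t B)‖ ≤
        C₁ * (2 * (M : ℝ) + 1) ^ ν * Real.exp (v * |t| - ((N : ℝ) - (M : ℝ))) * ‖B‖)
    (ω : ℝ → ℝ) (hω_nonneg : ∀ t, 0 ≤ ω t) (hω_even : ∀ t, ω (-t) = ω t)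
    (hω_int : Integrable ω) (hω_one : ∫ t : ℝ, ω t = 1)
    (f f₁ : ℝ → ℝ)
    (hf_cont : ContinuousOn f (Set.Ioi 0))
    (hf_anti : AntitoneOn f (Set.Ioi 0)) (hf_pos : ∀ t : ℝ, 0 < t → 0 < f t)
    (hf_lim : Tendsto f atTop (nhds 0))
    (hf₁_cont : ContinuousOn f₁ (Set.Ioi 0))
    (hf₁_anti : AntitoneOn f₁ (Set.Ioi 0)) (hf₁_pos : ∀ t : ℝ, 0 < t → 0 < f₁ t)
    (hf₁_lim : Tendsto f₁ atTop (nhds 0))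
    (hK₁ : BddAbove {r : ℝ | ∃ N : ℕ, 1 ≤ N ∧
      r = f ((N : ℝ) - ((N / 2 : ℕ) : ℝ)) / f₁ N})
    (hK₂ : BddAbove {r : ℝ | ∃ N : ℕ, 1 ≤ N ∧
      r = (2 * (N : ℝ) + 1) ^ ν * Real.exp (-((N / 2 : ℕ) : ℝ) / 2) / f₁ N})
    (hK₃ : BddAbove {r : ℝ | ∃ N : ℕ, 1 ≤ N ∧
      r = (∫ t in Set.Ioi (((N / 2 : ℕ) : ℝ) / (2 * v)), ω t) / f₁ N}) :
    ∀ A : 𝒜, memDf E f A →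
      Integrable (fun t : ℝ => ω t • τ t A) ∧
      memDf E f₁ (∫ t : ℝ, ω t • τ t A) :=
  fun _ hA => stmt_15_general (fun N => (E N).restrictScalars ℝ) hE_norm
    (fun N x => by simpa using hE_comp N N x) (fun t => (τ t).restrictScalars ℝ)
    hτ_contr hτ_cont hC₁ hv hτ_loc hω_nonneg hω_even hω_int hf_pos hf₁_pos hK₁ hK₂ hK₃ hA
end
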